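/- arXiv:1609.06385 — 5 statements merged into one kernel-verified Lean document; each statement's English description precedes it below -/
import Mathlib

section
/- Let K ≥ 2 and let L be the Lee–Lin–Wahba loss with φ convex and non-decreasing on the sum-to-zero score set S₀ ⊂ ℝ^K. Then Condition 1 holds: for all ε ≥ 0, all p ∈ Δ_K, every j₀ ∈ J(0,p) and every j_ε ∈ J(ε,p), inf_{s ∈ T(S₀,ε,p)} R(s,p) = inf_{s ∈ M(S₀,j_ε) ∩ M(S₀,j₀)} R(s,p). -/
/-!
The risk of the Lee–Lin–Wahba loss is `R(s,p) = ∑ k, (1 - p k) * φ (s k)`, a sum with non-negative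
weights (`risk_LLW`). Fix `s ∈ T(S₀,ε,p)`, maximal at some `ε`-suboptimal index `j`. Three moves,
each preserving the sum of the scores and not increasing the risk, bring `s` into
`M(S₀,jε) ∩ M(S₀,j₀)`:

* swap coordinates `j` and `jε`; as `p jε ≥ p j`, the larger score moves to the smaller weight;
* swap `j₀` with an index carrying the largest score among those other than `jε`, for the same
  reason (`exists_swap`);
* replace the scores at `jε` and `j₀` by their average; with `a ≥ b` the two scores and `m` their
  average, convexity and monotonicity give `φ a - φ m ≥ φ m - φ b ≥ 0`, while the weight of `jε`
  is at least the weight of `j₀`.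

So the infimum over `T` is at least the one over the intersection; the converse inequality
is the inclusion `M(S₀,jε) ∩ M(S₀,j₀) ⊆ T(S₀,ε,p)`.
-/

open scoped BigOperators

noncomputable section

namespace Calib

/-- Infimum in the extended reals of a real-valued function over a set
(empty set ↦ `+∞`). -/
def einf {α : Type*} (A : Set α) (f : α → ℝ) : EReal :=
  sInf ((fun a => (f a : EReal)) '' A)

/-- Infimum in the extended reals of an `EReal`-valued function over a set. -/
def einfE {α : Type*} (A : Set α) (f : α → EReal) : EReal :=
  sInf (f '' A)

/-- Supremum in the extended reals of a real-valued function over a set. -/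
def esup {α : Type*} (A : Set α) (f : α → ℝ) : EReal :=
  sSup ((fun a => (f a : EReal)) '' A)

/-- Supremum in the extended reals of an `EReal`-valued function over a set. -/
def esupE {α : Type*} (A : Set α) (f : α → EReal) : EReal :=
  sSup (f '' A)

variable {K : ℕ}

/-- Pointwise surrogate risk `R(s,p) = ∑ k p_k L(s,k)`. -/
def risk (L : (Fin K → ℝ) → Fin K → ℝ) (s p : Fin K → ℝ) : ℝ :=
  ∑ k, p k * L s k

/-- Pseudo-risk `R'(s,p) = l(s) + ∑ k p_k (L(s,k) − l(s))` for an adjustment `l`. -/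
def pseudoRisk (L : (Fin K → ℝ) → Fin K → ℝ) (l : (Fin K → ℝ) → ℝ)
    (s p : Fin K → ℝ) : ℝ :=
  l s + ∑ k, p k * (L s k - l s)

/-- `M(S,j)`: scores in `S` whose `j`-th coordinate is maximal. -/
def Mset (S : Set (Fin K → ℝ)) (j : Fin K) : Set (Fin K → ℝ) :=
  {s ∈ S | ∀ k, s k ≤ s j}

/-- `max_y p_y − p_j ≥ ε`. -/
def subOpt (ε : ℝ) (p : Fin K → ℝ) (j : Fin K) : Prop :=
  ∃ y, ε ≤ p y - p j

/-- `T(S,ε,p)`: union of `M(S,j)` over `ε`-suboptimal indices `j`. -/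
def Tset (S : Set (Fin K → ℝ)) (ε : ℝ) (p : Fin K → ℝ) : Set (Fin K → ℝ) :=
  {s | ∃ j, subOpt ε p j ∧ s ∈ Mset S j}

/-- `J(ε,p)`: `ε`-suboptimal indices of maximal probability. -/
def Jset (ε : ℝ) (p : Fin K → ℝ) : Set (Fin K) :=
  {j | subOpt ε p j ∧ ∀ i, subOpt ε p i → p i ≤ p j}

/-- `δ_max(ε,p)`. -/
def deltaMaxP (L : (Fin K → ℝ) → Fin K → ℝ) (S : Set (Fin K → ℝ))
    (ε : ℝ) (p : Fin K → ℝ) : EReal :=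
  einf (Tset S ε p) (fun s => risk L s p) - einf S (fun s => risk L s p)

/-- `δ_max(ε)`. -/
def deltaMax (L : (Fin K → ℝ) → Fin K → ℝ) (S : Set (Fin K → ℝ)) (ε : ℝ) : EReal :=
  sInf ((fun p => deltaMaxP L S ε p) '' stdSimplex ℝ (Fin K))

/-- The vector `(a, b) ∈ ℝ²`. -/
def pair (a b : ℝ) : Fin 2 → ℝ := ![a, b]

/-- `p^ε = ((1+ε)/2, (1−ε)/2)`. -/
def pEps (ε : ℝ) : Fin 2 → ℝ := pair ((1 + ε) / 2) ((1 - ε) / 2)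

/-- `δ_binary(ε)` for a binary loss `L₂` with adjustment `l₂`. -/
def deltaBinary (L2 : (Fin 2 → ℝ) → Fin 2 → ℝ) (S2 : Set (Fin 2 → ℝ))
    (l2 : (Fin 2 → ℝ) → ℝ) (ε : ℝ) : EReal :=
  einf S2 (fun u => pseudoRisk L2 l2 u (pEps 0)) -
    einf S2 (fun v => pseudoRisk L2 l2 v (pEps ε))

/-- Condition 1. -/
def Cond1 (L : (Fin K → ℝ) → Fin K → ℝ) (S : Set (Fin K → ℝ)) : Prop :=
  ∀ ε : ℝ, 0 ≤ ε → ∀ p ∈ stdSimplex ℝ (Fin K), ∀ j0 ∈ Jset 0 p, ∀ je ∈ Jset ε p,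
    einf (Tset S ε p) (fun s => risk L s p) =
      einf (Mset S je ∩ Mset S j0) (fun s => risk L s p)

/-- Condition 2 relative to a binary loss `L₂` with adjustment `l₂`. -/
def Cond2 (L : (Fin K → ℝ) → Fin K → ℝ) (S : Set (Fin K → ℝ))
    (L2 : (Fin 2 → ℝ) → Fin 2 → ℝ) (S2 : Set (Fin 2 → ℝ))
    (l2 : (Fin 2 → ℝ) → ℝ) : Prop :=
  ∀ i j : Fin K, i ≠ j → ∀ p ∈ stdSimplex ℝ (Fin K),
    einfE S2 (fun u => esup S2 (fun v =>
        pseudoRisk L2 l2 u (pair ((p i + p j) / 2) ((p i + p j) / 2)) -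
          pseudoRisk L2 l2 v (pair (p i) (p j)))) ≤
      einfE (Mset S i ∩ Mset S j) (fun s =>
        esup {s' ∈ S | ∀ k, k ≠ i → k ≠ j → s' k = s k}
          (fun s' => risk L s p - risk L s' p))

/-- Condition 3 for an (extended-real-valued) function `ζ`. -/
def Cond3 (L2 : (Fin 2 → ℝ) → Fin 2 → ℝ) (S2 : Set (Fin 2 → ℝ))
    (l2 : (Fin 2 → ℝ) → ℝ) (ζ : ℝ → EReal) : Prop :=
  ∀ ε : ℝ, 0 < ε → ∀ p1 p2 : ℝ, 0 ≤ p2 → p2 ≤ p1 - ε → p1 + p2 ≤ 1 →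
    ζ (p1 - p2) ≤
      einf S2 (fun u => pseudoRisk L2 l2 u (pair ((p1 + p2) / 2) ((p1 + p2) / 2))) -
        einf S2 (fun v => pseudoRisk L2 l2 v (pair p1 p2))

/-- Lower-boundedness of the risk. -/
def LowerBoundedRisk (L : (Fin K → ℝ) → Fin K → ℝ) (S : Set (Fin K → ℝ)) : Prop :=
  ∃ B : ℝ, ∀ s ∈ S, ∀ p ∈ stdSimplex ℝ (Fin K), B ≤ risk L s p

/-- Symmetry of a loss. -/
def Symmetric (L : (Fin K → ℝ) → Fin K → ℝ) (S : Set (Fin K → ℝ)) : Prop :=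
  ∀ σ : Equiv.Perm (Fin K), ∀ s ∈ S, (s ∘ σ) ∈ S ∧
    ∀ p ∈ stdSimplex ℝ (Fin K), risk L s p = risk L (s ∘ σ) (p ∘ σ)

/-- The swapping assumption on a score set. -/
def SwapAssump (S : Set (Fin K → ℝ)) : Prop :=
  ∀ i j : Fin K, ∀ s, s ∈ Mset S j → (s ∘ Equiv.swap i j) ∈ Mset S i

/-- The vector obtained from `s` by replacing coordinates `i` and `j` with their average. -/
def avgVec (s : Fin K → ℝ) (i j : Fin K) : Fin K → ℝ :=
  fun k => if k = i ∨ k = j then (s i + s j) / 2 else s k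

/-- The averaging assumption on a score set. -/
def AvgAssump (S : Set (Fin K → ℝ)) : Prop :=
  ∀ i j : Fin K, ∀ s, s ∈ Mset S j → (∀ k, k ≠ j → s k ≤ s i) → s i < s j →
    avgVec s i j ∈ Mset S j ∩ Mset S i

/-- The Lee–Lin–Wahba loss `L(s,y) = ∑_{k ≠ y} φ(s_k)`. -/
def LLW (φ : ℝ → ℝ) (s : Fin K → ℝ) (y : Fin K) : ℝ :=
  ∑ k ∈ ({y}ᶜ : Finset (Fin K)), φ (s k)

/-- The sum-to-zero score set. -/
def sumZero (K : ℕ) : Set (Fin K → ℝ) := {s | ∑ k, s k = 0}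

/-- The background-discrimination loss of Zhang. -/
def BD (ψ φ F : ℝ → ℝ) (s : Fin K → ℝ) (y : Fin K) : ℝ :=
  ψ (s y) + F (∑ k, φ (s k))


/-- Condition ZhangInf (binary, for `ψ`). -/
def CondZhangInf (ψ : ℝ → ℝ) (L2 : (Fin 2 → ℝ) → Fin 2 → ℝ)
    (S2 : Set (Fin 2 → ℝ)) (l2 : (Fin 2 → ℝ) → ℝ) : Prop :=
  ∀ p1 p2 : ℝ, 0 ≤ p1 → 0 ≤ p2 →
    esupE S2 (fun v => einf S2 (fun u =>
        pseudoRisk L2 l2 u (pair ((p1 + p2) / 2) ((p1 + p2) / 2)) -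
          pseudoRisk L2 l2 v (pair p1 p2))) =
      esupE S2 (fun v =>
        einf {u ∈ S2 | u 0 = u 1 ∧ ψ (u 0) + ψ (u 1) ≤ ψ (v 0) + ψ (v 1)}
          (fun u =>
            pseudoRisk L2 l2 u (pair ((p1 + p2) / 2) ((p1 + p2) / 2)) -
              pseudoRisk L2 l2 v (pair p1 p2)))


/-- The coupled logistic-regression loss `L_log(s,y) = −s_y + ln(∑ k e^{s_k})`. -/
def Llog (s : Fin K → ℝ) (y : Fin K) : ℝ :=
  -s y + Real.log (∑ k, Real.exp (s k))

/-- The adjustment `l(s) = ln(∑ k e^{s_k})` of the coupled logistic-regression loss. -/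
def logAdj (s : Fin K → ℝ) : ℝ := Real.log (∑ k, Real.exp (s k))

/-- `−ln t` as an extended real, equal to `+∞` for `t ≤ 0`. -/
def negLog (t : ℝ) : EReal := if t ≤ 0 then ⊤ else ((-Real.log t : ℝ) : EReal)

/-- The pointwise surrogate risk of the decoupled logistic-regression loss
`L_LR(s,y) = −ln s_y`, namely `−∑ k p_k ln s_k` (with value `+∞` whenever
`p_k > 0` and `s_k = 0` for some `k`). -/
def riskLR (s p : Fin K → ℝ) : EReal := ∑ k, (p k : EReal) * negLog (s k)

/-- `δ_max(ε,p)` for an extended-real-valued pointwise surrogate risk. -/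
def deltaMaxPE (R : (Fin K → ℝ) → (Fin K → ℝ) → EReal) (S : Set (Fin K → ℝ))
    (ε : ℝ) (p : Fin K → ℝ) : EReal :=
  einfE (Tset S ε p) (fun s => R s p) - einfE S (fun s => R s p)

/-- `δ_max(ε)` for an extended-real-valued pointwise surrogate risk. -/
def deltaMaxE (R : (Fin K → ℝ) → (Fin K → ℝ) → EReal) (S : Set (Fin K → ℝ))
    (ε : ℝ) : EReal :=
  sInf ((fun p => deltaMaxPE R S ε p) '' stdSimplex ℝ (Fin K))

/-- `δ_binary(ε)` for the binary decoupled logistic-regression loss on `Δ₂`. -/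
def deltaBinaryLR (ε : ℝ) : EReal :=
  einfE (stdSimplex ℝ (Fin 2)) (fun u => riskLR u (pEps 0)) -
    einfE (stdSimplex ℝ (Fin 2)) (fun v => riskLR v (pEps ε))

end Calib

namespace Calib

lemma risk_LLW {K : ℕ} (φ : ℝ → ℝ) (s p : Fin K → ℝ) (hp : ∑ k, p k = 1) :
    risk (LLW φ) s p = ∑ k, (1 - p k) * φ (s k) := by
  have h : ∀ y, LLW φ s y = ∑ k, φ (s k) - φ (s y) := by
    intro y
    have := Finset.sum_add_sum_compl {y} (fun k => φ (s k))
    rw [Finset.sum_singleton] at this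
    unfold LLW
    linarith
  simp only [risk, h, mul_sub, sub_mul, one_mul, Finset.sum_sub_distrib, ← Finset.sum_mul, hp]

/-- Two sums over `Fin K` that agree off `{i, j}` compare as their `{i, j}`-parts do. -/
lemma sum_le_sum_of_pair {K : ℕ} {f g : Fin K → ℝ} {i j : Fin K} (hij : i ≠ j)
    (h : f i + f j ≤ g i + g j) (hfg : ∀ k, k ≠ i → k ≠ j → f k = g k) :
    ∑ k, f k ≤ ∑ k, g k := by
  rw [← Finset.sum_add_sum_compl {i, j} f, ← Finset.sum_add_sum_compl {i, j} g,
    Finset.sum_pair hij, Finset.sum_pair hij]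
  have : ∑ k ∈ ({i, j}ᶜ : Finset (Fin K)), f k = ∑ k ∈ ({i, j}ᶜ : Finset (Fin K)), g k := by
    refine Finset.sum_congr rfl fun k hk => ?_
    simp only [Finset.mem_compl, Finset.mem_insert, Finset.mem_singleton, not_or] at hk
    exact hfg k hk.1 hk.2
  linarith

lemma sum_swap_weighted {K : ℕ} {φ : ℝ → ℝ} (hφ : Monotone φ) (s q : Fin K → ℝ) (i j : Fin K)
    (hs : s i ≤ s j) (hq : q i ≤ q j) :
    ∑ k, q k * φ (s (Equiv.swap i j k)) ≤ ∑ k, q k * φ (s k) := by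
  rcases eq_or_ne i j with rfl | hij
  · simp
  refine sum_le_sum_of_pair hij ?_ fun k hi hj => by rw [Equiv.swap_apply_of_ne_of_ne hi hj]
  simp only [Equiv.swap_apply_left, Equiv.swap_apply_right]
  nlinarith [mul_nonneg (sub_nonneg.2 (hφ hs)) (sub_nonneg.2 hq)]

/-- Averaging the two scores `s i ≤ s j` does not increase the weighted sum when the larger score
carries the larger weight. -/
lemma sum_avg_weighted {K : ℕ} {φ : ℝ → ℝ} (hc : ConvexOn ℝ (Set.univ : Set ℝ) φ)
    (hφ : Monotone φ) (s q : Fin K → ℝ) {i j : Fin K} (hij : i ≠ j)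
    (hs : s i ≤ s j) (hq0 : 0 ≤ q i) (hq : q i ≤ q j) :
    ∑ k, q k * φ (avgVec s i j k) ≤ ∑ k, q k * φ (s k) := by
  refine sum_le_sum_of_pair hij ?_ fun k hi hj => by simp [avgVec, hi, hj]
  simp only [avgVec, true_or, or_true, if_true]
  have h1 : φ ((s i + s j) / 2) ≤ φ (s j) := hφ (by linarith)
  have h2 : φ ((s i + s j) / 2) ≤ (φ (s i) + φ (s j)) / 2 := by
    have := hc.2 (Set.mem_univ (s i)) (Set.mem_univ (s j))
      (by norm_num : (0 : ℝ) ≤ 1 / 2) (by norm_num : (0 : ℝ) ≤ 1 / 2) (by norm_num)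
    simp only [smul_eq_mul] at this
    rw [show (s i + s j) / 2 = 1 / 2 * s i + 1 / 2 * s j by ring]
    linarith
  nlinarith [mul_nonneg (sub_nonneg.2 hq) (sub_nonneg.2 h1), mul_nonneg hq0 (sub_nonneg.2 h2)]

lemma avgVec_sum {K : ℕ} (s : Fin K → ℝ) {i j : Fin K} (hij : i ≠ j) :
    ∑ k, avgVec s i j k = ∑ k, s k := by
  have h : avgVec s i j i + avgVec s i j j = s i + s j := by simp [avgVec]
  have h' : ∀ k, k ≠ i → k ≠ j → avgVec s i j k = s k := fun k hi hj => by simp [avgVec, hi, hj]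
  exact le_antisymm (sum_le_sum_of_pair hij h.le h')
    (sum_le_sum_of_pair hij h.ge fun k hi hj => (h' k hi hj).symm)

/-- If `j` has the smallest weight among the indices of `A ∋ j`, then some swap inside `A` makes
`j` carry the largest score on `A`, without increasing the weighted sum. -/
lemma exists_swap {K : ℕ} {φ : ℝ → ℝ} (hφ : Monotone φ) (s q : Fin K → ℝ) (A : Finset (Fin K))
    {j : Fin K} (hj : j ∈ A) (hq : ∀ i ∈ A, q j ≤ q i) :
    ∃ s' : Fin K → ℝ, ∑ k, s' k = ∑ k, s k ∧ (∀ k ∈ A, s' k ≤ s' j) ∧ (∀ k ∉ A, s' k = s k) ∧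
      (∀ k ∈ A, ∃ l ∈ A, s' k = s l) ∧ ∑ k, q k * φ (s' k) ≤ ∑ k, q k * φ (s k) := by
  obtain ⟨i, hi, hmax⟩ := A.exists_max_image s ⟨j, hj⟩
  have hmem : ∀ k ∈ A, Equiv.swap j i k ∈ A := by
    intro k hk
    rw [Equiv.swap_apply_def]
    split_ifs <;> assumption
  refine ⟨fun k => s (Equiv.swap j i k), Equiv.sum_comp (Equiv.swap j i) s, fun k hk => ?_,
    fun k hk => ?_, fun k hk => ⟨_, hmem k hk, rfl⟩,
    sum_swap_weighted hφ s q j i (hmax j hj) (hq i hi)⟩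
  · simp only [Equiv.swap_apply_left]
    exact hmax _ (hmem k hk)
  · have h1 : k ≠ j := fun h => hk (h ▸ hj)
    have h2 : k ≠ i := fun h => hk (h ▸ hi)
    simp only [Equiv.swap_apply_of_ne_of_ne h1 h2]

/-- Scores maximal at `a` can be moved to scores maximal at both `a` and `b` without increasing
the weighted sum, when `b` has the smallest weight. -/
lemma exists_both_max {K : ℕ} {φ : ℝ → ℝ} (hc : ConvexOn ℝ (Set.univ : Set ℝ) φ)
    (hφ : Monotone φ) (s q : Fin K → ℝ) (a b : Fin K) (hs : s ∈ Mset (sumZero K) a)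
    (hq0 : ∀ k, 0 ≤ q k) (hq : ∀ k, q b ≤ q k) :
    ∃ s' ∈ Mset (sumZero K) a ∩ Mset (sumZero K) b,
      ∑ k, q k * φ (s' k) ≤ ∑ k, q k * φ (s k) := by
  rcases eq_or_ne b a with rfl | hba
  · exact ⟨s, ⟨hs, hs⟩, le_rfl⟩
  obtain ⟨t, ht0, htmax, hta, htA, htle⟩ := exists_swap hφ s q (Finset.univ.erase a)
    (j := b) (by simp [hba]) (fun i _ => hq i)
  have hta' : t a = s a := hta a (by simp)
  have htb : ∀ k, k ≠ a → t k ≤ t b := fun k hk => htmax k (by simp [hk])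
  have hba' : t b ≤ t a := by
    obtain ⟨l, -, hl⟩ := htA b (by simp [hba])
    rw [hta', hl]
    exact hs.2 l
  have hsum : avgVec t b a ∈ sumZero K := by
    change ∑ k, avgVec t b a k = 0
    rw [avgVec_sum t hba, ht0]
    exact hs.1
  have hle : ∀ k, avgVec t b a k ≤ (t b + t a) / 2 := by
    intro k
    unfold avgVec
    split_ifs with h
    · exact le_rfl
    · push Not at h
      linarith [htb k h.2]
  refine ⟨avgVec t b a, ⟨⟨hsum, fun k => ?_⟩, ⟨hsum, fun k => ?_⟩⟩,
    (sum_avg_weighted hc hφ t q hba hba' (hq0 b) (hq a)).trans htle⟩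
  · simpa [avgVec] using hle k
  · simpa [avgVec] using hle k

end Calib

theorem lemma_LLWCondInfAtJepsJ0 {K : ℕ} (hK : 2 ≤ K) (φ : ℝ → ℝ)
    (hφconv : ConvexOn ℝ (Set.univ : Set ℝ) φ) (hφmono : Monotone φ) :
    Calib.Cond1 (Calib.LLW φ) (Calib.sumZero K) := by
  intro ε _ p hp j0 hj0 je hje
  apply le_antisymm
  · refine sInf_le_sInf (Set.image_mono ?_)
    rintro s ⟨hs, -⟩
    exact ⟨je, hje.1, hs⟩
  · refine le_sInf ?_
    rintro _ ⟨s, ⟨j, hj, hs⟩, rfl⟩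
    have hp0 : ∀ k, 0 ≤ 1 - p k := fun k => sub_nonneg.2 <| by
      rw [← hp.2]
      exact Finset.single_le_sum (fun i _ => hp.1 i) (Finset.mem_univ k)
    -- every index is `0`-suboptimal, so `j0` maximises `p`
    have hmin : ∀ k, 1 - p j0 ≤ 1 - p k := fun k => by
      linarith [hj0.2 k ⟨k, by simp⟩]
    have ht : (fun k => s (Equiv.swap je j k)) ∈ Calib.Mset (Calib.sumZero K) je := by
      refine ⟨(Equiv.sum_comp (Equiv.swap je j) s).trans hs.1, fun k => ?_⟩
      simp only [Equiv.swap_apply_left]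
      exact hs.2 _
    have htle := Calib.sum_swap_weighted hφmono s (fun k => 1 - p k) je j (hs.2 je)
      (by linarith [hje.2 j hj])
    obtain ⟨s', hs', hle⟩ := Calib.exists_both_max hφconv hφmono _ (fun k => 1 - p k) je j0 ht
      hp0 hmin
    refine (sInf_le (Set.mem_image_of_mem _ hs')).trans ?_
    simp only [Calib.risk_LLW φ _ p hp.2]
    exact EReal.coe_le_coe_iff.2 (hle.trans htle)
end
end

section
/- Let K ≥ 2 and let L be the Lee–Lin–Wahba loss with φ convex on the sum-to-zero score set S₀ ⊂ ℝ^K, and assume L is lower-bounded in risk. Then for all i ≠ j in {1,…,K} and all p ∈ Δ_K: inf over s ∈ M(S₀,i) ∩ M(S₀,j) of sup over s' ∈ S₀ with s'_k = s_k for all k ∉ {i,j} of [R(s,p) − R(s',p)] is ≥ inf over θ ≥ 0 of sup over t ∈ ℝ of [(2 − p_i − p_j)·φ(θ) − (1 − p_i)·φ(θ + t) − (1 − p_j)·φ(θ − t)]. -/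
/-!
Since `∑ p_k = 1`, the risk of the Lee–Lin–Wahba loss is `∑ k, (1 - p_k) φ(s_k)`
(`risk_LLW_eq`). A score `s` in `M(S₀,i) ∩ M(S₀,j)` has `s_i = s_j = θ` equal to its maximal
coordinate, and `θ ≥ 0` because the coordinates sum to zero. For every `t`, moving mass `t` from
coordinate `j` to coordinate `i` gives an admissible `s'`, and the risk difference
`R(s,p) - R(s',p)` is exactly the bracket on the binary side at `(θ, t)`. Hence the supremum for
`s` dominates the supremum for `θ`.
-/

open scoped BigOperators

noncomputable section

theorem risk_LLW_eq {K : ℕ} (φ : ℝ → ℝ) (s p : Fin K → ℝ) (hp : ∑ k, p k = 1) :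
    Calib.risk (Calib.LLW φ) s p = ∑ k, (1 - p k) * φ (s k) := by
  have h : ∀ y, Calib.LLW φ s y = ∑ k, φ (s k) - φ (s y) := by
    intro y
    rw [Calib.LLW, ← Finset.sum_compl_add_sum ({y} : Finset (Fin K)) (fun k => φ (s k))]
    simp
  simp only [Calib.risk, h, mul_sub, sub_mul, one_mul, Finset.sum_sub_distrib]
  rw [← Finset.sum_mul, hp, one_mul]

/-- Splits off the terms of index `i` and `j` from a sum over `Fin K`. -/
theorem sum_eq_add_add_sum {K : ℕ} (f : Fin K → ℝ) {i j : Fin K} (hij : i ≠ j) :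
    ∑ k, f k = f i + f j + ∑ k ∈ (Finset.univ.erase i).erase j, f k := by
  rw [← Finset.add_sum_erase Finset.univ f (Finset.mem_univ i),
    ← Finset.add_sum_erase (Finset.univ.erase i) f (a := j) (by simp [hij.symm]), add_assoc]

theorem lemma_LLWCondPairingSumToZero {K : ℕ} (hK : 2 ≤ K) (φ : ℝ → ℝ)
    (hφconv : ConvexOn ℝ (Set.univ : Set ℝ) φ)
    (hlb : Calib.LowerBoundedRisk (Calib.LLW φ) (Calib.sumZero K)) :
    ∀ i j : Fin K, i ≠ j → ∀ p ∈ stdSimplex ℝ (Fin K),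
      Calib.einfE (Set.Ici (0 : ℝ)) (fun θ =>
          Calib.esup (Set.univ : Set ℝ) (fun t =>
            (2 - p i - p j) * φ θ -
              (1 - p i) * φ (θ + t) - (1 - p j) * φ (θ - t))) ≤
        Calib.einfE
          (Calib.Mset (Calib.sumZero K) i ∩ Calib.Mset (Calib.sumZero K) j)
          (fun s =>
            Calib.esup
              {s' ∈ Calib.sumZero K | ∀ k, k ≠ i → k ≠ j → s' k = s k}
              (fun s' =>
                Calib.risk (Calib.LLW φ) s p - Calib.risk (Calib.LLW φ) s' p)) := by
  intro i j hij p hp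
  refine le_sInf ?_
  rintro _ ⟨s, ⟨⟨hs0, hsi⟩, ⟨-, hsj⟩⟩, rfl⟩
  have hs0' : ∑ k, s k = 0 := hs0
  have heq : s j = s i := le_antisymm (hsi j) (hsj i)
  have hθ : 0 ≤ s i := by
    by_contra hneg
    have : ∑ k, s k < 0 :=
      Finset.sum_neg (fun k _ => (hsi k).trans_lt (not_le.mp hneg)) ⟨i, Finset.mem_univ i⟩
    linarith
  refine (sInf_le (Set.mem_image_of_mem _ hθ)).trans (sSup_le ?_)
  rintro _ ⟨t, -, rfl⟩
  -- The competitor moves mass `t` from coordinate `j` to coordinate `i`.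
  set s' : Fin K → ℝ := fun k => if k = i then s i + t else if k = j then s i - t else s k
    with hs'
  have hi : s' i = s i + t := by simp [hs']
  have hj : s' j = s i - t := by simp [hs', hij.symm]
  have hk : ∀ k, k ≠ i → k ≠ j → s' k = s k := fun k h1 h2 => by simp [hs', h1, h2]
  have hrest : ∀ f : Fin K → ℝ → ℝ, ∑ k ∈ (Finset.univ.erase i).erase j, f k (s' k) =
      ∑ k ∈ (Finset.univ.erase i).erase j, f k (s k) := fun f =>
    Finset.sum_congr rfl fun k hmem => by
      simp only [Finset.mem_erase] at hmem
      rw [hk k hmem.2.1 hmem.1]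
  have hmem : s' ∈ Calib.sumZero K := by
    show ∑ k, s' k = 0
    have h := hrest fun _ x => x
    rw [sum_eq_add_add_sum _ hij] at hs0' ⊢
    rw [h, hi, hj]
    linarith
  refine le_sSup ⟨s', ⟨hmem, hk⟩, ?_⟩
  have h := hrest fun k x => (1 - p k) * φ x
  simp only [EReal.coe_eq_coe_iff]
  rw [risk_LLW_eq φ s p hp.2, risk_LLW_eq φ s' p hp.2, sum_eq_add_add_sum _ hij,
    sum_eq_add_add_sum (fun k => (1 - p k) * φ (s' k)) hij, h, hi, hj, heq]
  ring
end
end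

section
/- Let φ(t) := max(0, 1+t) be the hinge transformation. Then for all p₁, p₂ ∈ [0,1]: inf over θ ≥ 0 of sup over t ∈ ℝ of [(2 − p₁ − p₂)·φ(θ) − (1 − p₁)·φ(θ + t) − (1 − p₂)·φ(θ − t)] equals inf over u ∈ ℝ of [(1 − p̄)(φ(u) + φ(−u))] minus inf over v ∈ ℝ of [(1 − p₁)φ(v) + (1 − p₂)φ(−v)], where p̄ = (p₁ + p₂)/2. (In particular both sides equal |p₁ − p₂|.) -/
/-!
Put `a = 1 - p1` and `b = 1 - p2`, both nonnegative, and write `φ` for the hinge. Since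
`φ(x) ≥ 0` both weights may be lowered to `min a b`, and then `φ(x) ≥ 1 + x` gives
`a φ(θ + t) + b φ(θ - t) ≥ 2 (1 + θ) min a b` for every `t`,
with equality when `t = ±(1 + θ)`, the sign being chosen so that the argument of the hinge with the
larger weight is `-1`. The inner supremum is therefore `(1 + θ) (a + b - 2 min a b)`, that is
`(1 + θ) |p1 - p2|`, whose infimum over `θ ≥ 0` is attained at `θ = 0`. The case `θ = 0` of the
same fact gives `2 min a b` for the last infimum, and the other infimum is `a + b`, attained at
`u = 0`, so their difference is `|p1 - p2|` too.
-/

open scoped BigOperators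

noncomputable section

/-- The hinge transformation `φ(t) = (1+t)₊`. -/
noncomputable def hinge (t : ℝ) : ℝ := max 0 (1 + t)

theorem einf_eq_of_attained {α : Type*} {A : Set α} {f : α → ℝ} {x : α} (hx : x ∈ A)
    (h : ∀ y ∈ A, f x ≤ f y) : Calib.einf A f = (f x : EReal) := by
  refine IsLeast.csInf_eq ⟨⟨x, hx, rfl⟩, ?_⟩
  rintro _ ⟨y, hy, rfl⟩
  exact EReal.coe_le_coe_iff.2 (h y hy)

theorem esup_eq_of_attained {α : Type*} {A : Set α} {f : α → ℝ} {x : α} (hx : x ∈ A)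
    (h : ∀ y ∈ A, f y ≤ f x) : Calib.esup A f = (f x : EReal) := by
  refine IsGreatest.csSup_eq ⟨⟨x, hx, rfl⟩, ?_⟩
  rintro _ ⟨y, hy, rfl⟩
  exact EReal.coe_le_coe_iff.2 (h y hy)

theorem hinge_nonneg (t : ℝ) : 0 ≤ hinge t := le_max_left _ _

theorem one_add_le_hinge (t : ℝ) : 1 + t ≤ hinge t := le_max_right _ _

theorem hinge_of_nonneg {t : ℝ} (h : 0 ≤ 1 + t) : hinge t = 1 + t := max_eq_right h

theorem weighted_hinge_ge {a b : ℝ} (ha : 0 ≤ a) (hb : 0 ≤ b) (θ t : ℝ) :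
    2 * (1 + θ) * min a b ≤ a * hinge (θ + t) + b * hinge (θ - t) := by
  have h1 := mul_le_mul_of_nonneg_right (min_le_left a b) (hinge_nonneg (θ + t))
  have h2 := mul_le_mul_of_nonneg_right (min_le_right a b) (hinge_nonneg (θ - t))
  have h3 := mul_le_mul_of_nonneg_left
    (add_le_add (one_add_le_hinge (θ + t)) (one_add_le_hinge (θ - t))) (le_min ha hb)
  linarith

theorem exists_weighted_hinge_eq (a b : ℝ) {θ : ℝ} (hθ : 0 ≤ θ) :
    ∃ t, a * hinge (θ + t) + b * hinge (θ - t) = 2 * (1 + θ) * min a b := by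
  rcases le_total a b with h | h
  · refine ⟨1 + θ, ?_⟩
    rw [hinge_of_nonneg (by linarith), hinge_of_nonneg (by linarith), min_eq_left h]
    ring
  · refine ⟨-(1 + θ), ?_⟩
    rw [hinge_of_nonneg (by linarith), hinge_of_nonneg (by linarith), min_eq_right h]
    ring

theorem add_sub_two_mul_min (a b : ℝ) : a + b - 2 * min a b = |b - a| := by
  rcases le_total a b with h | h
  · rw [min_eq_left h, abs_of_nonneg (by linarith)]
    ring
  · rw [min_eq_right h, abs_of_nonpos (by linarith)]
    ring

theorem esup_hinge {p1 p2 θ : ℝ} (h1 : p1 ≤ 1) (h2 : p2 ≤ 1) (hθ : 0 ≤ θ) :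
    Calib.esup (Set.univ : Set ℝ) (fun t => (2 - p1 - p2) * hinge θ -
      (1 - p1) * hinge (θ + t) - (1 - p2) * hinge (θ - t)) =
      (((1 + θ) * |p1 - p2| : ℝ) : EReal) := by
  obtain ⟨t, ht⟩ := exists_weighted_hinge_eq (1 - p1) (1 - p2) hθ
  rw [esup_eq_of_attained (Set.mem_univ t)]
  · have h := add_sub_two_mul_min (1 - p1) (1 - p2)
    rw [show 1 - p2 - (1 - p1) = p1 - p2 by ring] at h
    rw [← h, hinge_of_nonneg (by linarith), EReal.coe_eq_coe_iff]
    linarith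
  · intro y _
    have := weighted_hinge_ge (sub_nonneg.2 h1) (sub_nonneg.2 h2) θ y
    linarith

theorem lemma_sumToZeroFreeLunchHinge :
    ∀ p1 p2 : ℝ, 0 ≤ p1 → p1 ≤ 1 → 0 ≤ p2 → p2 ≤ 1 →
      Calib.einfE (Set.Ici (0 : ℝ)) (fun θ =>
          Calib.esup (Set.univ : Set ℝ) (fun t =>
            (2 - p1 - p2) * hinge θ -
              (1 - p1) * hinge (θ + t) - (1 - p2) * hinge (θ - t))) =
        Calib.einf (Set.univ : Set ℝ)
            (fun u => (1 - (p1 + p2) / 2) * (hinge u + hinge (-u))) -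
          Calib.einf (Set.univ : Set ℝ)
            (fun v => (1 - p1) * hinge v + (1 - p2) * hinge (-v)) ∧
      Calib.einfE (Set.Ici (0 : ℝ)) (fun θ =>
          Calib.esup (Set.univ : Set ℝ) (fun t =>
            (2 - p1 - p2) * hinge θ -
              (1 - p1) * hinge (θ + t) - (1 - p2) * hinge (θ - t))) =
        ((|p1 - p2| : ℝ) : EReal) := by
  intro p1 p2 _ h1 _ h2
  have lhs : Calib.einfE (Set.Ici (0 : ℝ)) (fun θ =>
      Calib.esup (Set.univ : Set ℝ) (fun t => (2 - p1 - p2) * hinge θ -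
        (1 - p1) * hinge (θ + t) - (1 - p2) * hinge (θ - t))) =
      ((|p1 - p2| : ℝ) : EReal) := by
    refine IsLeast.csInf_eq ⟨⟨0, Set.mem_Ici.2 le_rfl, ?_⟩, ?_⟩
    · exact (esup_hinge h1 h2 le_rfl).trans (by simp)
    · rintro _ ⟨θ, hθ, rfl⟩
      refine le_of_le_of_eq ?_ (esup_hinge h1 h2 hθ).symm
      rw [EReal.coe_le_coe_iff]
      have := mul_nonneg (Set.mem_Ici.1 hθ) (abs_nonneg (p1 - p2))
      linarith
  refine ⟨lhs.trans ?_, lhs⟩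
  obtain ⟨v, hv⟩ := exists_weighted_hinge_eq (1 - p1) (1 - p2) (le_refl (0 : ℝ))
  rw [zero_add, zero_sub] at hv
  rw [einf_eq_of_attained (Set.mem_univ (0 : ℝ)), einf_eq_of_attained (Set.mem_univ v),
    ← EReal.coe_sub, EReal.coe_eq_coe_iff]
  · have h := add_sub_two_mul_min (1 - p1) (1 - p2)
    rw [show 1 - p2 - (1 - p1) = p1 - p2 by ring] at h
    rw [hv, ← h, neg_zero, hinge_of_nonneg (by norm_num)]
    ring
  · intro y _
    have := weighted_hinge_ge (sub_nonneg.2 h1) (sub_nonneg.2 h2) 0 y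
    rw [zero_add, zero_sub] at this
    linarith
  · intro y _
    refine mul_le_mul_of_nonneg_left ?_ (by linarith)
    rw [neg_zero, hinge_of_nonneg (by norm_num)]
    linarith [one_add_le_hinge y, one_add_le_hinge (-y)]
end
end

section
/- Let K ≥ 2, let φ : ℝ → ℝ be convex, and let L be the Lee–Lin–Wahba loss with φ on the sum-to-zero score set S₀ ⊂ ℝ^K, assumed lower-bounded in risk. For p ∈ Δ_K, ε > 0 with max_k p_k − min_k p_k ≥ ε, j₀ ∈ J(0,p) and j_ε ∈ J(ε,p), define δ(ε,p) := inf over θ ≥ 0 of {(2 − p_{j₀} − p_{j_ε})·φ(θ) − inf over t ∈ ℝ of [(1 − p_{j₀})·φ(θ + t) + (1 − p_{j_ε})·φ(θ − t)]}, and set δ(ε,p) := +∞ when max_k p_k − min_k p_k < ε. If δ(ε,p) > 0 for all ε > 0, then δ(·,p) is a calibration function for L at p: for every ε > 0 and every s ∈ S₀, if R(s,p) − inf_{s' ∈ S₀} R(s',p) < δ(ε,p), then max_y p_y − p_j < ε for every index j with s_j = max_k s_k. Equivalently, δ_max(ε,p) ≥ δ(ε,p) for all ε > 0. -/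
/-!
The risk of the Lee–Lin–Wahba loss is `R(s,p) = ∑ k, (1 - p k) * φ (s k)` (`risk_LLW`), so lowering
a score and raising the score of the most probable class `j₀` by the same amount is favourable as
soon as `φ` has a nonnegative slope where the scores end up.

Positivity of `δ` supplies that slope (`exists_neg_lt`). The loss is lower-bounded in risk, hence `φ`
is bounded below (`phi_bddBelow`). If `φ` came arbitrarily close to its infimum on `[0, ∞)`, the
expression minimised over `θ` in `δ` would be arbitrarily small there. So some `x < 0` satisfies
`φ x < φ θ` for all `θ ≥ 0`, and every subgradient of `φ` at a point of `[0, ∞)` is positive.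

Let `s` be a sum-to-zero score whose maximum is attained at an `ε`-suboptimal index `j`. Cap the
scores other than `s j₀` at a level `c`, and give `j₀` the mass removed. The intermediate value
theorem yields a level `c ≥ 0` at which `j₀` receives exactly the score `c` (`exists_level`). With a
subgradient `g > 0` of `φ` at `c`, the terms of the capped indices drop by at least `(1 - p j₀) * g`
per unit of mass, and the term of `j₀` rises by at most that, so the risk does not increase. In the
new score `j` and `j₀` share the value `θ = c`, and moving them to `θ - t` and `θ + t` stays in the
sum-to-zero set. This bounds the excess risk of `s` below by the `θ`-expression of `δ` with `p j` in
place of `p j_ε`. As `p j ≤ p j_ε`, replacing `p j` by `p j_ε` increases the expression only for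
those `t` at which it is nonpositive anyway, again by the subgradient inequality
(`exists_theta_bound`).
-/

open scoped BigOperators

noncomputable section

/-- The quantity `δ(ε,p)` of Ávila Pires et al., for given indices
`j₀ ∈ J(0,p)` and `j_ε ∈ J(ε,p)`. -/
noncomputable def deltaTheta {K : ℕ} (φ : ℝ → ℝ) (p : Fin K → ℝ)
    (j0 je : Fin K) : EReal :=
  Calib.einfE (Set.Ici (0 : ℝ)) (fun θ =>
    (((2 - p j0 - p je) * φ θ : ℝ) : EReal) -
      Calib.einf (Set.univ : Set ℝ)
        (fun t => (1 - p j0) * φ (θ + t) + (1 - p je) * φ (θ - t)))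

theorem exists_subgradient {φ : ℝ → ℝ} (hφ : ConvexOn ℝ (Set.univ : Set ℝ) φ) (x : ℝ) :
    ∃ g : ℝ, ∀ y, φ x + g * (y - x) ≤ φ y := by
  have hx : x ∈ interior (Set.univ : Set ℝ) := by simp
  refine ⟨derivWithin φ (Set.Ioi x) x, fun y => ?_⟩
  rcases lt_trichotomy y x with h | h | h
  · have h1 := hφ.slope_le_leftDeriv_of_mem_interior (Set.mem_univ y) hx h
    have h2 := h1.trans (hφ.leftDeriv_le_rightDeriv_of_mem_interior hx)
    rw [slope_def_field, div_le_iff₀ (by linarith)] at h2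
    linarith
  · simp [h]
  · have h1 := hφ.rightDeriv_le_slope_of_mem_interior hx (Set.mem_univ y) h
    rw [slope_def_field, le_div_iff₀ (by linarith)] at h1
    linarith

theorem risk_LLW {K : ℕ} (φ : ℝ → ℝ) (s p : Fin K → ℝ) (hp : p ∈ stdSimplex ℝ (Fin K)) :
    Calib.risk (Calib.LLW φ) s p = ∑ k, (1 - p k) * φ (s k) := by
  have h : ∀ y, Calib.LLW φ s y = ∑ k, φ (s k) - φ (s y) := by
    intro y
    have := Finset.sum_compl_add_sum ({y} : Finset (Fin K)) (fun k => φ (s k))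
    rw [Finset.sum_singleton] at this
    unfold Calib.LLW
    linarith
  unfold Calib.risk
  simp_rw [h, mul_sub, sub_mul, Finset.sum_sub_distrib, ← Finset.sum_mul, hp.2]
  simp

theorem phi_bddBelow {K : ℕ} (hK : 2 ≤ K) {φ : ℝ → ℝ}
    (hlb : Calib.LowerBoundedRisk (Calib.LLW φ) (Calib.sumZero K)) :
    BddBelow (Set.range φ) := by
  obtain ⟨B, hB⟩ := hlb
  let i : Fin K := ⟨0, by omega⟩
  have hK' : (2 : ℝ) ≤ K := by exact_mod_cast hK
  have hcard : (((({i} : Finset (Fin K))ᶜ).card : ℕ) : ℝ) = K - 1 := by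
    rw [Finset.card_compl, Fintype.card_fin, Finset.card_singleton, Nat.cast_sub (by omega)]
    simp
  refine ⟨B / (K - 1), ?_⟩
  rintro _ ⟨x, rfl⟩
  -- Test the point mass at `i` against the score equal to `x` at every other index.
  let s : Fin K → ℝ := fun k => if k = i then -((K - 1) * x) else x
  have hoff : ∀ (f : ℝ → ℝ), ∑ k ∈ ({i}ᶜ : Finset (Fin K)), f (s k) = (K - 1) * f x := by
    intro f
    rw [Finset.sum_congr rfl (g := fun _ => f x), Finset.sum_const, nsmul_eq_mul, hcard]
    intro k hk
    have : k ≠ i := by simpa using hk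
    simp [s, this]
  have hs : s ∈ Calib.sumZero K := by
    have h1 := Finset.sum_compl_add_sum ({i} : Finset (Fin K)) s
    have h2 := hoff (fun z => z)
    have h3 : s i = -((K - 1) * x) := by simp [s]
    rw [Finset.sum_singleton] at h1
    show ∑ k, s k = 0
    linarith
  have h := hB s hs (Pi.single i 1) (single_mem_stdSimplex ℝ i)
  have hr : Calib.risk (Calib.LLW φ) s (Pi.single i 1) = (K - 1) * φ x := by
    unfold Calib.risk
    rw [Finset.sum_eq_single i]
    · simpa [Calib.LLW] using hoff φ
    · intro b _ hb
      simp [hb]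
    · simp
  rw [hr] at h
  rw [div_le_iff₀ (by linarith)]
  linarith

theorem le_one_of_mem {K : ℕ} {p : Fin K → ℝ} (hp : p ∈ stdSimplex ℝ (Fin K)) (k : Fin K) :
    p k ≤ 1 := by
  rw [← hp.2]
  exact Finset.single_le_sum (fun i _ => hp.1 i) (Finset.mem_univ k)

/-- A bound on the `θ`-expression of `δ`, uniform in `t`, bounds `δ`. -/
theorem deltaTheta_le {K : ℕ} {φ : ℝ → ℝ} {p : Fin K → ℝ} {j0 je : Fin K} {θ d : ℝ} (hθ : 0 ≤ θ)
    (h : ∀ t, (2 - p j0 - p je) * φ θ - ((1 - p j0) * φ (θ + t) + (1 - p je) * φ (θ - t)) ≤ d) :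
    deltaTheta φ p j0 je ≤ (d : EReal) := by
  have h1 : (((2 - p j0 - p je) * φ θ - d : ℝ) : EReal) ≤ Calib.einf (Set.univ : Set ℝ)
      (fun t => (1 - p j0) * φ (θ + t) + (1 - p je) * φ (θ - t)) := by
    refine le_sInf ?_
    rintro _ ⟨t, -, rfl⟩
    have := h t
    exact EReal.coe_le_coe_iff.2 (by linarith)
  refine (sInf_le ⟨θ, hθ, rfl⟩ : deltaTheta φ p j0 je ≤ _).trans ?_
  refine (EReal.sub_le_sub le_rfl h1).trans ?_
  rw [← EReal.coe_sub]
  exact EReal.coe_le_coe_iff.2 (by linarith)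

/-- Positivity of `δ` forces `φ` to go strictly below all its values on `[0, ∞)` at some negative
point. -/
theorem exists_neg_lt {K : ℕ} {φ : ℝ → ℝ} (hb : BddBelow (Set.range φ)) {p : Fin K → ℝ}
    (hp : p ∈ stdSimplex ℝ (Fin K)) {j0 je : Fin K} (hpos : 0 < deltaTheta φ p j0 je) :
    ∃ x < 0, ∀ θ, 0 ≤ θ → φ x < φ θ := by
  by_contra hcon
  push Not at hcon
  obtain ⟨d, hd0, hd⟩ := EReal.lt_iff_exists_real_btwn.1 hpos
  have hd0' : 0 < d := by exact_mod_cast hd0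
  obtain ⟨_, ⟨x, rfl⟩, hx⟩ := exists_lt_of_csInf_lt (Set.range_nonempty φ)
    (show sInf (Set.range φ) < sInf (Set.range φ) + d / 2 by linarith)
  obtain ⟨θ, hθ, hθx⟩ : ∃ θ, 0 ≤ θ ∧ φ θ ≤ φ x := by
    rcases lt_or_ge x 0 with h | h
    · exact hcon x h
    · exact ⟨x, h, le_rfl⟩
  refine absurd hd (not_lt.2 (deltaTheta_le hθ fun t => ?_))
  have hm : ∀ y, φ θ - d / 2 ≤ φ y := fun y => by
    have := csInf_le hb ⟨y, rfl⟩
    linarith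
  have h0 := hp.1 j0
  have he := hp.1 je
  have h0' := le_one_of_mem hp j0
  have he' := le_one_of_mem hp je
  have h1 := mul_le_mul_of_nonneg_left (hm (θ + t)) (sub_nonneg.2 h0')
  have h2 := mul_le_mul_of_nonneg_left (hm (θ - t)) (sub_nonneg.2 he')
  have h3 : 0 ≤ (p j0 + p je) * d := by positivity
  linarith

/-- The level at which capping the other scores frees exactly the mass that lifts `s j0` to that
level. -/
theorem exists_level {K : ℕ} {s : Fin K → ℝ} (hs : s ∈ Calib.sumZero K) {j : Fin K}
    (hj : ∀ k, s k ≤ s j) (j0 : Fin K) :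
    ∃ c, 0 ≤ c ∧ c ≤ s j ∧ s j0 + ∑ k ∈ ({j0}ᶜ : Finset (Fin K)), max (s k - c) 0 = c := by
  have hs' : ∑ k, s k = 0 := hs
  have hv : 0 ≤ s j := by
    by_contra h
    have : ∑ k, s k < 0 := Finset.sum_neg (fun k _ => (hj k).trans_lt (not_le.1 h)) ⟨j, by simp⟩
    linarith
  let f : ℝ → ℝ := fun c => s j0 + ∑ k ∈ ({j0}ᶜ : Finset (Fin K)), max (s k - c) 0 - c
  have hf : Continuous f := by fun_prop
  have h0 : 0 ≤ f 0 := by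
    have h1 := Finset.sum_compl_add_sum ({j0} : Finset (Fin K)) s
    rw [Finset.sum_singleton] at h1
    have h2 : ∑ k ∈ ({j0}ᶜ : Finset (Fin K)), s k ≤
        ∑ k ∈ ({j0}ᶜ : Finset (Fin K)), max (s k - 0) 0 :=
      Finset.sum_le_sum fun k _ => by simp
    simp only [f]
    linarith
  have h1 : f (s j) ≤ 0 := by
    have : ∑ k ∈ ({j0}ᶜ : Finset (Fin K)), max (s k - s j) 0 = 0 :=
      Finset.sum_eq_zero fun k _ => max_eq_right (by linarith [hj k])
    simp only [f, this]
    linarith [hj j0]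
  obtain ⟨c, hc, hfc⟩ := intermediate_value_Icc' hv hf.continuousOn ⟨h1, h0⟩
  exact ⟨c, hc.1, hc.2, by simp only [f] at hfc; linarith⟩

/-- If `s` is maximal at `j`, then at a suitable `θ ≥ 0` the `θ`-expression of `δ` is at most the
excess risk of `s` over any lower bound `r` of the risk. -/
theorem exists_theta_bound {K : ℕ} {φ : ℝ → ℝ} (hφ : ConvexOn ℝ (Set.univ : Set ℝ) φ)
    {p : Fin K → ℝ} (hp : p ∈ stdSimplex ℝ (Fin K)) {j0 je j : Fin K} (hj0 : ∀ k, p k ≤ p j0)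
    (hje : p j ≤ p je) (hne : j ≠ j0) {x : ℝ} (hx0 : x < 0) (hx : ∀ θ, 0 ≤ θ → φ x < φ θ)
    {r : ℝ} (hr : ∀ s ∈ Calib.sumZero K, r ≤ Calib.risk (Calib.LLW φ) s p)
    {s : Fin K → ℝ} (hs : s ∈ Calib.sumZero K) (hj : ∀ k, s k ≤ s j) :
    ∃ θ, 0 ≤ θ ∧ ∀ t,
      (2 - p j0 - p je) * φ θ - ((1 - p j0) * φ (θ + t) + (1 - p je) * φ (θ - t)) ≤
        Calib.risk (Calib.LLW φ) s p - r := by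
  have hs' : ∑ k, s k = 0 := hs
  obtain ⟨c, hc0, hcj, hc⟩ := exists_level hs hj j0
  obtain ⟨g, hg⟩ := exists_subgradient hφ c
  have hg0 : 0 < g := by
    have h1 := hg x
    have h2 := hx c hc0
    by_contra h
    nlinarith
  have hq : ∀ k, 0 ≤ 1 - p k := fun k => sub_nonneg.2 (le_one_of_mem hp k)
  refine ⟨c, hc0, fun t => ?_⟩
  have h1 := hg (c + t)
  have h2 := hg (c - t)
  rcases lt_or_ge (φ c - φ (c - t)) 0 with hA | hA
  · have hnn : 0 ≤ Calib.risk (Calib.LLW φ) s p - r := sub_nonneg.2 (hr s hs)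
    refine le_trans ?_ hnn
    rcases le_total 0 t with ht | ht
    · have h3 : 0 ≤ g * t := by positivity
      have h4 := mul_nonneg (hq j0) (show 0 ≤ φ (c + t) - φ c by linarith)
      have h5 := mul_nonneg (hq je) (show 0 ≤ φ (c - t) - φ c by linarith)
      linarith
    · have h3 : 0 ≤ (p j0 - p je) * (g * -t) :=
        mul_nonneg (sub_nonneg.2 (hj0 je)) (mul_nonneg hg0.le (by linarith))
      have h4 := mul_le_mul_of_nonneg_left h1 (hq j0)
      have h5 := mul_le_mul_of_nonneg_left h2 (hq je)
      linarith
  ·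
    -- The capped score with `j0` and `j` moved to `c + t` and `c - t`.
    let w : Fin K → ℝ := fun k => if k = j0 then c + t else if k = j then c - t else min (s k) c
    have hw0 : w j0 = c + t := by simp [w]
    have hwj : w j = c - t := by simp [w, hne]
    have hmin : ∀ k, max (s k - c) 0 = s k - min (s k) c := fun k => by
      rcases le_total (s k) c with h | h
      · rw [min_eq_left h, max_eq_right (by linarith)]; ring
      · rw [min_eq_right h, max_eq_left (by linarith)]
    have hsplit : ∀ f : Fin K → ℝ, ∑ k, f k = f j0 + ∑ k ∈ ({j0}ᶜ : Finset (Fin K)), f k := by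
      intro f
      have := Finset.sum_compl_add_sum ({j0} : Finset (Fin K)) f
      rw [Finset.sum_singleton] at this
      linarith
    have hjm : j ∈ ({j0}ᶜ : Finset (Fin K)) := by simpa using hne
    have hwm : ∀ f : Fin K → ℝ → ℝ, ∑ k ∈ ({j0}ᶜ : Finset (Fin K)), f k (w k) =
        ∑ k ∈ ({j0}ᶜ : Finset (Fin K)), f k (min (s k) c) + (f j (c - t) - f j c) := by
      intro f
      rw [← Finset.add_sum_erase _ _ hjm,
        ← Finset.add_sum_erase _ (fun k => f k (min (s k) c)) hjm, hwj, min_eq_right hcj,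
        Finset.sum_congr rfl (g := fun k => f k (min (s k) c))]
      · ring
      · intro k hk
        have hk1 : k ≠ j := (Finset.mem_erase.1 hk).1
        have hk2 : k ≠ j0 := by simpa using (Finset.mem_erase.1 hk).2
        simp [w, hk1, hk2]
    have hw : w ∈ Calib.sumZero K := by
      show ∑ k, w k = 0
      have e1 := hsplit s
      have e2 := hsplit w
      have e3 := hwm (fun _ z => z)
      simp_rw [hmin, Finset.sum_sub_distrib] at hc
      linarith
    have hrw := hr w hw
    have hq' : ∀ k, 1 - p j0 ≤ 1 - p k := fun k => by linarith [hj0 k]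
    -- Capping gains at least `(1 - p j0) * g` per unit of mass removed.
    have hcap : (1 - p j0) * g * ∑ k ∈ ({j0}ᶜ : Finset (Fin K)), max (s k - c) 0 ≤
        ∑ k ∈ ({j0}ᶜ : Finset (Fin K)), (1 - p k) * φ (s k) -
          ∑ k ∈ ({j0}ᶜ : Finset (Fin K)), (1 - p k) * φ (min (s k) c) := by
      rw [Finset.mul_sum, ← Finset.sum_sub_distrib]
      refine Finset.sum_le_sum fun k _ => ?_
      rcases le_total (s k) c with h | h
      · rw [min_eq_left h, max_eq_right (by linarith)]; simp
      · rw [min_eq_right h, max_eq_left (by linarith)]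
        have e1 : 0 ≤ g * (s k - c) := mul_nonneg hg0.le (by linarith)
        have e2 := mul_le_mul_of_nonneg_right (hq' k) e1
        have e3 := mul_le_mul_of_nonneg_left (hg (s k)) (hq k)
        linarith
    have hlift := mul_le_mul_of_nonneg_left (hg (s j0)) (hq j0)
    have e1 := hsplit (fun k => (1 - p k) * φ (s k))
    have e2 := hsplit (fun k => (1 - p k) * φ (w k))
    have e3 := hwm (fun k z => (1 - p k) * φ z)
    rw [risk_LLW φ w p hp] at hrw
    rw [risk_LLW φ s p hp]
    simp only [hw0] at e1 e2 e3
    have hsum : ∑ k ∈ ({j0}ᶜ : Finset (Fin K)), max (s k - c) 0 = c - s j0 := by linarith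
    rw [hsum] at hcap
    have e4 := mul_nonneg (sub_nonneg.2 hje) hA
    linarith

/-- The infimum `r` of the risk is a real number, and `δ` is at most the excess risk over `r` of any
score maximal at an `ε`-suboptimal index. -/
theorem exists_inf_bound {K : ℕ} (hK : 2 ≤ K) (φ : ℝ → ℝ)
    (hφconv : ConvexOn ℝ (Set.univ : Set ℝ) φ)
    (hlb : Calib.LowerBoundedRisk (Calib.LLW φ) (Calib.sumZero K))
    (p : Fin K → ℝ) (hp : p ∈ stdSimplex ℝ (Fin K))
    (hpos : ∀ ε : ℝ, 0 < ε → ∀ j0 ∈ Calib.Jset 0 p, ∀ je ∈ Calib.Jset ε p,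
      0 < deltaTheta φ p j0 je) :
    ∃ r : ℝ, Calib.einf (Calib.sumZero K) (fun s' => Calib.risk (Calib.LLW φ) s' p) = r ∧
      ∀ ε : ℝ, 0 < ε → ∀ j0 ∈ Calib.Jset 0 p, ∀ je ∈ Calib.Jset ε p, ∀ j, Calib.subOpt ε p j →
        ∀ s ∈ Calib.sumZero K, (∀ k, s k ≤ s j) →
          deltaTheta φ p j0 je ≤ ((Calib.risk (Calib.LLW φ) s p - r : ℝ) : EReal) := by
  obtain ⟨B, hB⟩ := id hlb
  have hz : (0 : Fin K → ℝ) ∈ Calib.sumZero K := by simp [Calib.sumZero]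
  have hbot : ((B : ℝ) : EReal) ≤
      Calib.einf (Calib.sumZero K) (fun s' => Calib.risk (Calib.LLW φ) s' p) := by
    refine le_sInf ?_
    rintro _ ⟨s, hs, rfl⟩
    exact EReal.coe_le_coe_iff.2 (hB s hs p hp)
  have hle : ∀ s ∈ Calib.sumZero K,
      Calib.einf (Calib.sumZero K) (fun s' => Calib.risk (Calib.LLW φ) s' p) ≤
        ((Calib.risk (Calib.LLW φ) s p : ℝ) : EReal) := fun s hs => sInf_le ⟨s, hs, rfl⟩
  have hr := EReal.coe_toReal (ne_top_of_le_ne_top (EReal.coe_ne_top _) (hle 0 hz))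
    (ne_bot_of_le_ne_bot (EReal.coe_ne_bot _) hbot)
  refine ⟨_, hr.symm, ?_⟩
  intro ε hε j0 hj0 je hje j hj s hs hmax
  have hj0' : ∀ k, p k ≤ p j0 := fun k => hj0.2 k ⟨k, by simp⟩
  have hne : j ≠ j0 := by
    rintro rfl
    obtain ⟨y, hy⟩ := hj
    linarith [hj0' y]
  obtain ⟨x, hx0, hx⟩ := exists_neg_lt (phi_bddBelow hK hlb) hp (hpos ε hε j0 hj0 je hje)
  obtain ⟨θ, hθ, h⟩ := exists_theta_bound hφconv hp hj0' (hje.2 j hj) hne hx0 hx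
    (fun s hs => EReal.coe_le_coe_iff.1 (hr.le.trans (hle s hs))) hs hmax
  exact deltaTheta_le hθ h

theorem thm_avilapires {K : ℕ} (hK : 2 ≤ K) (φ : ℝ → ℝ)
    (hφconv : ConvexOn ℝ (Set.univ : Set ℝ) φ)
    (hlb : Calib.LowerBoundedRisk (Calib.LLW φ) (Calib.sumZero K))
    (p : Fin K → ℝ) (hp : p ∈ stdSimplex ℝ (Fin K))
    (hpos : ∀ ε : ℝ, 0 < ε → ∀ j0 ∈ Calib.Jset 0 p, ∀ je ∈ Calib.Jset ε p,
      0 < deltaTheta φ p j0 je) :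
    -- `δ(·,p)` is a calibration function for the loss at `p`:
    (∀ ε : ℝ, 0 < ε → ∀ j0 ∈ Calib.Jset 0 p, ∀ je ∈ Calib.Jset ε p,
      ∀ s ∈ Calib.sumZero K,
        ((Calib.risk (Calib.LLW φ) s p : ℝ) : EReal) -
            Calib.einf (Calib.sumZero K)
              (fun s' => Calib.risk (Calib.LLW φ) s' p) <
          deltaTheta φ p j0 je →
        ∀ j : Fin K, (∀ k, s k ≤ s j) → ∀ y, p y - p j < ε) ∧
    -- equivalently, `δ_max(ε,p) ≥ δ(ε,p)` for all `ε > 0`: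
    (∀ ε : ℝ, 0 < ε → ∀ j0 ∈ Calib.Jset 0 p, ∀ je ∈ Calib.Jset ε p,
      deltaTheta φ p j0 je ≤
        Calib.deltaMaxP (Calib.LLW φ) (Calib.sumZero K) ε p) ∧
    -- and `δ_max(ε,p) = +∞ = δ(ε,p)` when `max_k p_k − min_k p_k < ε`:
    (∀ ε : ℝ, 0 < ε → (¬ ∃ y j : Fin K, ε ≤ p y - p j) →
      Calib.deltaMaxP (Calib.LLW φ) (Calib.sumZero K) ε p = ⊤) := by
  obtain ⟨r, hr, hmain⟩ := exists_inf_bound hK φ hφconv hlb p hp hpos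
  refine ⟨?_, ?_, ?_⟩
  · intro ε hε j0 hj0 je hje s hs hlt j hj y
    by_contra hy
    have h := hmain ε hε j0 hj0 je hje j ⟨y, not_lt.1 hy⟩ s hs hj
    rw [hr, ← EReal.coe_sub] at hlt
    exact absurd hlt (not_lt.2 h)
  · intro ε hε j0 hj0 je hje
    unfold Calib.deltaMaxP
    rw [hr, EReal.le_sub_iff_add_le (Or.inl (EReal.coe_ne_bot r)) (Or.inl (EReal.coe_ne_top r))]
    refine le_sInf ?_
    rintro _ ⟨s, ⟨j, hj, hs, hmax⟩, rfl⟩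
    refine (add_le_add_left (hmain ε hε j0 hj0 je hje j hj s hs hmax) _).trans ?_
    rw [← EReal.coe_add]
    exact EReal.coe_le_coe_iff.2 (by linarith)
  · intro ε hε hno
    have hT : Calib.Tset (Calib.sumZero K) ε p = ∅ := by
      refine Set.eq_empty_of_forall_notMem ?_
      rintro s ⟨j, ⟨y, hy⟩, -⟩
      exact hno ⟨y, j, hy⟩
    unfold Calib.deltaMaxP
    rw [hr, hT]
    simp [Calib.einf]
end
end

section
/- Let K ≥ 2 and let L be the Lee–Lin–Wahba loss with the hinge transformation φ(t) = max(0, 1+t) on the sum-to-zero score set S₀ ⊂ ℝ^K. Then for every ε ∈ (0,1] and every p ∈ Δ_K with max_k p_k − min_k p_k ≥ ε, and every j₀ ∈ J(0,p), j_ε ∈ J(ε,p): δ_max(ε,p) ≥ p_{j₀} − p_{j_ε} ≥ ε; consequently δ_max(ε) ≥ ε for all ε ∈ (0,1]. -/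
/-!
The pointwise risk is `R(s,p) = ∑ k, (1 - p_k) u_k` with `u_k = max(0, 1 + s_k)`. Let `j₀` be a most
likely class.

* The sum-to-zero score equal to `K - 1` at `j₀` and `-1` elsewhere has risk `K (1 - p_{j₀})`, so
  the unconstrained infimum is at most this value (`exists_risk_eq`).
* On the sum-to-zero set `∑ u_k ≥ K`, and if `s_j` is maximal then `s_j ≥ 0`, so `u_j ≥ 1`. Bounding
  `1 - p_k ≥ 1 - p_{j₀}` for `k ≠ j` gives
  `R(s,p) ≥ (1 - p_{j₀}) ∑ u_k + (p_{j₀} - p_j) u_j ≥ K (1 - p_{j₀}) + (p_{j₀} - p_j)`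
  (`risk_lower_bound`).

Subtracting yields `δ_max(ε,p) ≥ c` whenever every `ε`-suboptimal `j` has `p_{j₀} - p_j ≥ c`
(`le_deltaMaxP`); both claims are instances, with `c = p_{j₀} - p_{j_ε}` and `c = ε`.
-/


open scoped BigOperators

noncomputable section

theorem risk_LLW_hinge {K : ℕ} {p : Fin K → ℝ} (hp : p ∈ stdSimplex ℝ (Fin K)) (s : Fin K → ℝ) :
    Calib.risk (Calib.LLW hinge) s p = ∑ k, (1 - p k) * hinge (s k) := by
  have h (k : Fin K) : Calib.LLW hinge s k = ∑ i, hinge (s i) - hinge (s k) := by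
    have := Finset.sum_compl_add_sum ({k} : Finset (Fin K)) (fun i => hinge (s i))
    rw [Finset.sum_singleton] at this
    unfold Calib.LLW
    linarith
  unfold Calib.risk
  simp_rw [h, mul_sub, sub_mul, one_mul, Finset.sum_sub_distrib]
  rw [← Finset.sum_mul, hp.2, one_mul]

theorem exists_risk_eq {K : ℕ} {p : Fin K → ℝ} (hp : p ∈ stdSimplex ℝ (Fin K)) (j0 : Fin K) :
    ∃ s ∈ Calib.sumZero K, Calib.risk (Calib.LLW hinge) s p = K * (1 - p j0) := by
  refine ⟨fun k => (if k = j0 then (K : ℝ) else 0) - 1, ?_, ?_⟩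
  · simp [Calib.sumZero, Finset.sum_sub_distrib]
  · have h (k : Fin K) : hinge ((if k = j0 then (K : ℝ) else 0) - 1) =
        if k = j0 then (K : ℝ) else 0 := by
      unfold hinge
      split_ifs <;> simp
    rw [risk_LLW_hinge hp]
    simp_rw [h]
    simp [mul_comm]

theorem risk_lower_bound {K : ℕ} {p : Fin K → ℝ} (hp : p ∈ stdSimplex ℝ (Fin K)) {j0 j : Fin K}
    (hj0 : ∀ k, p k ≤ p j0) {s : Fin K → ℝ} (hs : s ∈ Calib.Mset (Calib.sumZero K) j) :
    K * (1 - p j0) + (p j0 - p j) ≤ Calib.risk (Calib.LLW hinge) s p := by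
  obtain ⟨h0, hmax⟩ := hs
  have h0 : ∑ k, s k = 0 := h0
  have hsum : (K : ℝ) ≤ ∑ k, hinge (s k) := by
    calc (K : ℝ) = ∑ k, (1 + s k) := by simp [Finset.sum_add_distrib, h0]
      _ ≤ _ := Finset.sum_le_sum fun k _ => le_max_right _ _
  -- The maximal coordinate is nonnegative, since the average of all coordinates is zero.
  have hsj : 0 ≤ s j := by
    by_contra! hneg
    have : ∑ k, s k < 0 :=
      Finset.sum_neg (fun k _ => (hmax k).trans_lt hneg) ⟨j, Finset.mem_univ j⟩
    linarith
  have huj : 1 ≤ hinge (s j) := le_max_of_le_right (by linarith)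
  have hp1 : p j0 ≤ 1 := by
    rw [← hp.2]
    exact Finset.single_le_sum (fun k _ => hp.1 k) (Finset.mem_univ j0)
  have hexcess : (p j0 - p j) * hinge (s j) ≤ ∑ k, (p j0 - p k) * hinge (s k) :=
    Finset.single_le_sum
      (f := fun k => (p j0 - p k) * hinge (s k))
      (fun k _ => mul_nonneg (sub_nonneg.2 (hj0 k)) (le_max_left _ _)) (Finset.mem_univ j)
  have hsplit : Calib.risk (Calib.LLW hinge) s p =
      (1 - p j0) * ∑ k, hinge (s k) + ∑ k, (p j0 - p k) * hinge (s k) := by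
    rw [risk_LLW_hinge hp, Finset.mul_sum, ← Finset.sum_add_distrib]
    exact Finset.sum_congr rfl fun k _ => by ring
  nlinarith [mul_le_mul_of_nonneg_left hsum (sub_nonneg.2 hp1),
    mul_le_mul_of_nonneg_left huj (sub_nonneg.2 (hj0 j))]

/-- When no index is `ε`-suboptimal the hypothesis `hc` is vacuous, and the bound still holds
because `δ_max(ε,p) = +∞`. -/
theorem le_deltaMaxP {K : ℕ} {p : Fin K → ℝ} (hp : p ∈ stdSimplex ℝ (Fin K)) {j0 : Fin K}
    (hj0 : ∀ k, p k ≤ p j0) {ε c : ℝ} (hc : ∀ j, Calib.subOpt ε p j → c ≤ p j0 - p j) :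
    (c : EReal) ≤ Calib.deltaMaxP (Calib.LLW hinge) (Calib.sumZero K) ε p := by
  have hT : ((K * (1 - p j0) + c : ℝ) : EReal) ≤
      Calib.einf (Calib.Tset (Calib.sumZero K) ε p)
        (fun s => Calib.risk (Calib.LLW hinge) s p) := by
    refine le_sInf ?_
    rintro _ ⟨s, ⟨j, hj, hs⟩, rfl⟩
    have := risk_lower_bound hp hj0 hs
    exact EReal.coe_le_coe_iff.2 (by linarith [hc j hj])
  have hS : Calib.einf (Calib.sumZero K) (fun s => Calib.risk (Calib.LLW hinge) s p) ≤
      ((K * (1 - p j0) : ℝ) : EReal) := by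
    obtain ⟨s, hs, hr⟩ := exists_risk_eq hp j0
    exact sInf_le ⟨s, hs, by simp only [hr]⟩
  calc (c : EReal) = ((K * (1 - p j0) + c : ℝ) : EReal) - ((K * (1 - p j0) : ℝ) : EReal) := by
        rw [← EReal.coe_sub, add_sub_cancel_left]
    _ ≤ _ := EReal.sub_le_sub hT hS

theorem thm_lLLW_hinge {K : ℕ} (hK : 2 ≤ K) :
    (∀ ε : ℝ, 0 < ε → ε ≤ 1 → ∀ p ∈ stdSimplex ℝ (Fin K),
      (∃ y j : Fin K, ε ≤ p y - p j) →
      ∀ j0 ∈ Calib.Jset 0 p, ∀ je ∈ Calib.Jset ε p,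
        ((p j0 - p je : ℝ) : EReal) ≤
            Calib.deltaMaxP (Calib.LLW hinge) (Calib.sumZero K) ε p ∧
          ε ≤ p j0 - p je) ∧
    (∀ ε : ℝ, 0 < ε → ε ≤ 1 →
      ((ε : ℝ) : EReal) ≤ Calib.deltaMax (Calib.LLW hinge) (Calib.sumZero K) ε) := by
  refine ⟨fun ε _ _ p hp _ j0 hj0 je hje => ?_, fun ε _ _ => ?_⟩
  · -- Every index is `0`-suboptimal, so `j0` maximizes `p` over all indices.
    have hmax (k : Fin K) : p k ≤ p j0 := hj0.2 k ⟨k, by simp⟩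
    refine ⟨le_deltaMaxP hp hmax fun j hj => by linarith [hje.2 j hj], ?_⟩
    obtain ⟨y, hy⟩ := hje.1
    linarith [hmax y]
  · refine le_sInf ?_
    rintro _ ⟨p, hp, rfl⟩
    have : Nonempty (Fin K) := ⟨⟨0, by omega⟩⟩
    obtain ⟨j0, hmax⟩ := Finite.exists_max p
    refine le_deltaMaxP hp hmax ?_
    rintro j ⟨y, hy⟩
    linarith [hmax y]
end
end
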